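/- Assume $r > 1$ and $1 < d < q - 1$. If $F_1, \dots, F_r$ are linearly independent homogeneous polynomials of degree $d$ in $\mathbb{F}_q[x_0,\dots,x_m]$ such that $0 < \deg \gcd(F_i, F_j) < d - 1$ for some $i \ne j$, then $|V(F_1, \dots, F_r)| < (d-1)q^{m-1} + p_{m-2}$. -/

import Mathlib

open MvPolynomial

/-- `pp q k` is the number of points of `ℙ^k(F_q)`, zero for negative `k`. -/
noncomputable def pp (q : ℕ) (k : ℤ) : ℕ :=
  if k < 0 then 0 else ∑ i ∈ Finset.range (k.toNat + 1), q ^ i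

/-! Write `F_i = D * G` and `F_j = D * H` with `G`, `H` relatively prime, so that
`V(F_i, F_j) = V(D) ∪ V(G, H)`; let `e = deg D` and `δ = deg G = deg H = d - e ≥ 2`.

By the Schwartz–Zippel lemma with multiplicities, the multiplicities of a nonzero form of degree `e`
in `n + 1` variables at the nonzero points of `F_q^(n+1)` add up to at most `e * (q ^ n - 1)`, which
bounds `|V(D)|` by `e * p_(m-1)`. To bound `|V(G, H)|`, make `G` monic in `x₀` by a linear change of
coordinates and eliminate `x₀`: the norm of `H` modulo `G` is a nonzero form of degree `δ ^ 2` in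
`m` variables whose multiplicity at a point is at least the number of common zeros above it, so
`|V(G, H)| ≤ δ ^ 2 * p_(m-2)`. As `e + δ = d < q - 1`, the sum of the two bounds is smaller than
`(d - 1) * q ^ (m - 1) + p_(m-2)`. -/

section VanishingOrder

variable {σ R : Type*} [CommRing R]

/-- The Taylor shift `f(x) ↦ f(x + p)`, moving the point `p` to the origin. -/
noncomputable def taylorShift (p : σ → R) : MvPolynomial σ R →ₐ[R] MvPolynomial σ R :=
  aeval fun i => X i + C (p i)

/-- The multiplicity of `f` at the point `p`: the least degree of a monomial in the expansion of
`f` in powers of `x - p`, and `⊤` for `f = 0`. -/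
noncomputable def vanishingOrder (p : σ → R) (f : MvPolynomial σ R) : ℕ∞ :=
  (taylorShift p f : MvPowerSeries σ R).order

theorem constantCoeff_taylorShift (p : σ → R) (f : MvPolynomial σ R) :
    constantCoeff (taylorShift p f) = eval p f := by
  have h : (constantCoeff (R := R)).comp (taylorShift p).toRingHom = eval p :=
    ringHom_ext (by simp [taylorShift]) (by simp [taylorShift])
  exact RingHom.congr_fun h f

theorem vanishingOrder_eq_zero_iff {p : σ → R} {f : MvPolynomial σ R} :
    vanishingOrder p f = 0 ↔ eval p f ≠ 0 := by
  rw [← constantCoeff_taylorShift, ← not_iff_not, not_not, ← ne_eq, vanishingOrder,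
    MvPowerSeries.order_ne_zero_iff_constCoeff_eq_zero]
  rfl

theorem vanishingOrder_mul [NoZeroDivisors R] (p : σ → R) (f g : MvPolynomial σ R) :
    vanishingOrder p (f * g) = vanishingOrder p f + vanishingOrder p g := by
  rw [vanishingOrder, map_mul, coe_mul, MvPowerSeries.order_mul, vanishingOrder, vanishingOrder]

theorem vanishingOrder_X_sub_C [Nontrivial R] [DecidableEq R] (p : σ → R) (i : σ) (c : R) :
    vanishingOrder p (X i - C c) = if p i = c then 1 else 0 := by
  split_ifs with h
  · classical
    simp [vanishingOrder, taylorShift, h, MvPowerSeries.X, MvPowerSeries.order_monomial]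
  · simpa [vanishingOrder_eq_zero_iff, sub_eq_zero] using h

theorem le_vanishingOrder_of_mem_ker_eval_pow {p : σ → R} {f : MvPolynomial σ R} {s : ℕ}
    (h : f ∈ RingHom.ker (eval p) ^ s) : s ≤ vanishingOrder p f := by
  have hle : RingHom.ker (eval p) ≤ (idealOfVars σ R).comap (taylorShift p) := fun g hg => by
    rw [Ideal.mem_comap, ← pow_one (idealOfVars σ R), mem_pow_idealOfVars_iff']
    intro d hd
    rw [Nat.lt_one_iff, Finsupp.degree_eq_zero_iff] at hd
    rw [hd, ← constantCoeff_eq, constantCoeff_taylorShift]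
    exact hg
  have hmem := Ideal.le_comap_pow (taylorShift p) s (Ideal.pow_right_mono hle s h)
  rw [Ideal.mem_comap, mem_pow_idealOfVars_iff'] at hmem
  exact MvPowerSeries.nat_le_order fun d hd => hmem d hd

theorem vanishingOrder_zero_eq_order (f : MvPolynomial σ R) :
    vanishingOrder 0 f = (f : MvPowerSeries σ R).order := by
  simp [vanishingOrder, taylorShift]

theorem vanishingOrder_zero_le_totalDegree {f : MvPolynomial σ R} (hf : f ≠ 0) :
    vanishingOrder 0 f ≤ f.totalDegree := by
  obtain ⟨d, hd⟩ := ne_zero_iff.1 hf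
  rw [vanishingOrder_zero_eq_order]
  exact (MvPowerSeries.order_le hd).trans
    (Nat.cast_le.2 (le_totalDegree (mem_support_iff.2 hd)))

theorem isHomogeneous_totalDegree_of_le_vanishingOrder {f : MvPolynomial σ R}
    (h : f.totalDegree ≤ vanishingOrder 0 f) : f.IsHomogeneous f.totalDegree := by
  rw [vanishingOrder_zero_eq_order] at h
  intro d hd
  have hdeg : d.degree = f.totalDegree :=
    le_antisymm (le_totalDegree (mem_support_iff.2 hd))
      (Nat.cast_le.1 (h.trans (MvPowerSeries.order_le hd)))
  rwa [Finsupp.degree_eq_weight_one] at hdeg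

theorem vanishingOrder_zero_of_isHomogeneous {f : MvPolynomial σ R} {n : ℕ}
    (h : f.IsHomogeneous n) (hf : f ≠ 0) : vanishingOrder 0 f = n := by
  refine le_antisymm (h.totalDegree hf ▸ vanishingOrder_zero_le_totalDegree hf) ?_
  rw [vanishingOrder_zero_eq_order]
  exact MvPowerSeries.nat_le_order fun d hd => h.coeff_eq_zero hd.ne

-- Total degree and multiplicity at the origin are both additive; only homogeneous polynomials
-- have them equal.
theorem isHomogeneous_totalDegree_left_of_mul [IsDomain R] {f g : MvPolynomial σ R} {n : ℕ}
    (h : (f * g).IsHomogeneous n) (h0 : f * g ≠ 0) : f.IsHomogeneous f.totalDegree := by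
  have hf := left_ne_zero_of_mul h0
  have hg := right_ne_zero_of_mul h0
  have hdeg : f.totalDegree + g.totalDegree = n := by
    rw [← totalDegree_mul_of_isDomain hf hg, h.totalDegree h0]
  have hord : vanishingOrder 0 f + vanishingOrder 0 g = n := by
    rw [← vanishingOrder_mul, vanishingOrder_zero_of_isHomogeneous h h0]
  refine isHomogeneous_totalDegree_of_le_vanishingOrder ?_
  have hg' := vanishingOrder_zero_le_totalDegree hg
  rw [← hdeg, Nat.cast_add] at hord
  rw [← ENat.add_le_add_iff_right (ENat.natCast_ne_top g.totalDegree), ← hord]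
  gcongr

theorem exists_isHomogeneous_of_mul [IsDomain R] {f g : MvPolynomial σ R} {n : ℕ}
    (h : (f * g).IsHomogeneous n) (h0 : f * g ≠ 0) :
    ∃ a, g.IsHomogeneous a ∧ f.IsHomogeneous f.totalDegree ∧ f.totalDegree + a = n := by
  have hf := isHomogeneous_totalDegree_left_of_mul h h0
  have hg := isHomogeneous_totalDegree_left_of_mul (mul_comm f g ▸ h) (mul_comm f g ▸ h0)
  exact ⟨_, hg, hf, (hf.mul hg).inj_right h h0⟩

/-- The substitution `x₀ = c`, which reduces the number of variables; the variable `x_(i+1)` becomes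
`x_i`. -/
noncomputable def specialize {n : ℕ} (c : R) :
    MvPolynomial (Fin (n + 1)) R →ₐ[R] MvPolynomial (Fin n) R :=
  aeval (Fin.cons (C c) X)

theorem specialize_eq_eval_finSuccEquiv {n : ℕ} (c : R) (f : MvPolynomial (Fin (n + 1)) R) :
    specialize c f = (finSuccEquiv R n f).eval (C c) := by
  have h : (specialize c).toRingHom =
      (Polynomial.evalRingHom (C c)).comp (finSuccEquiv R n).toRingHom := by
    refine ringHom_ext (fun a => ?_) (Fin.cases ?_ fun j => ?_) <;>
      simp [specialize, finSuccEquiv_apply]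
  exact RingHom.congr_fun h f

theorem X_sub_C_dvd_iff_specialize_eq_zero {n : ℕ} {c : R} {f : MvPolynomial (Fin (n + 1)) R} :
    X 0 - C c ∣ f ↔ specialize c f = 0 := by
  have h : finSuccEquiv R n (X 0 - C c) = Polynomial.X - Polynomial.C (C c) := by
    simp [finSuccEquiv_apply]
  rw [← map_dvd_iff (finSuccEquiv R n), h, Polynomial.dvd_iff_isRoot, Polynomial.IsRoot,
    specialize_eq_eval_finSuccEquiv]

theorem totalDegree_specialize_le {n : ℕ} (c : R) (f : MvPolynomial (Fin (n + 1)) R) :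
    (specialize c f).totalDegree ≤ f.totalDegree := by
  rw [specialize_eq_eval_finSuccEquiv, Polynomial.eval_eq_sum]
  refine totalDegree_finsetSum_le fun i hi => ?_
  have hmul := totalDegree_mul ((finSuccEquiv R n f).coeff i) (C c ^ i)
  have hcoeff := totalDegree_coeff_finSuccEquiv_add_le f i (Polynomial.mem_support_iff.1 hi)
  rw [← C_pow, totalDegree_C, C_pow] at hmul
  exact hmul.trans (by omega)

theorem vanishingOrder_cons_le_vanishingOrder_specialize {n : ℕ} (c : R) (p : Fin n → R)
    (f : MvPolynomial (Fin (n + 1)) R) :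
    vanishingOrder (Fin.cons c p) f ≤ vanishingOrder p (specialize c f) := by
  have hcomm : taylorShift p (specialize c f) =
      specialize 0 (taylorShift (Fin.cons c p : Fin (n + 1) → R) f) := by
    have h : (taylorShift p).comp (specialize c) =
        (specialize 0).comp (taylorShift (Fin.cons c p : Fin (n + 1) → R)) := by
      refine algHom_ext (Fin.cases ?_ fun j => ?_) <;> simp [taylorShift, specialize]
    exact DFunLike.congr_fun h f
  refine MvPowerSeries.le_order fun d hd => ?_
  rw [coeff_coe, hcomm, specialize_eq_eval_finSuccEquiv, C_0, ← Polynomial.coeff_zero_eq_eval_zero,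
    finSuccEquiv_coeff_coeff]
  refine MvPowerSeries.coeff_of_lt_order (lt_of_le_of_lt ?_ hd)
  simp [Finsupp.degree_eq_sum, Fin.sum_univ_succ]

theorem sum_piFinset_fin_succ {α M : Type*} [AddCommMonoid M] {n : ℕ} (S : Finset α)
    (φ : (Fin (n + 1) → α) → M) :
    ∑ p ∈ Fintype.piFinset (fun _ => S), φ p =
      ∑ c ∈ S, ∑ p ∈ Fintype.piFinset (fun _ => S), φ (Fin.cons c p) := by
  rw [← Finset.sum_product']
  refine Finset.sum_equiv (Fin.consEquiv fun _ => α).symm (fun p => ?_) fun p _ => ?_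
  · simp [Fin.forall_fin_succ, Fin.tail]
  · simp

theorem sum_vanishingOrder_le_sum_vanishingOrder_specialize {n : ℕ} (S : Finset R)
    (f : MvPolynomial (Fin (n + 1)) R) :
    ∑ p ∈ Fintype.piFinset (fun _ => S), vanishingOrder p f ≤
      ∑ c ∈ S, ∑ p ∈ Fintype.piFinset (fun _ => S), vanishingOrder p (specialize c f) := by
  rw [sum_piFinset_fin_succ]
  gcongr with c _ p
  exact vanishingOrder_cons_le_vanishingOrder_specialize c p f

theorem vanishingOrder_eq_zero_of_isEmpty [IsEmpty σ] (p : σ → R) {f : MvPolynomial σ R}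
    (hf : f ≠ 0) : vanishingOrder p f = 0 := by
  rw [vanishingOrder_eq_zero_iff, eq_C_of_isEmpty f, eval_C]
  exact fun h => hf (by rw [eq_C_of_isEmpty f, h, C_0])

theorem sum_vanishingOrder_X_sub_C [Nontrivial R] {n : ℕ} {S : Finset R} {c : R} (hc : c ∈ S) :
    ∑ p ∈ Fintype.piFinset (fun _ : Fin (n + 1) => S), vanishingOrder p (X 0 - C c) =
      (S.card : ℕ∞) ^ n := by
  classical
  simp_rw [vanishingOrder_X_sub_C]
  rw [sum_piFinset_fin_succ]
  simp [hc]

theorem totalDegree_X_sub_C_mul [IsDomain R] (i : σ) (c : R) {g : MvPolynomial σ R} (hg : g ≠ 0) :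
    ((X i - C c) * g).totalDegree = 1 + g.totalDegree := by
  have hlin : (X i - C c : MvPolynomial σ R).totalDegree = 1 := by
    rw [sub_eq_add_neg, ← C_neg, totalDegree_add_eq_left_of_totalDegree_lt] <;> simp
  have hne : (X i - C c : MvPolynomial σ R) ≠ 0 := fun h => by simp [h] at hlin
  rw [totalDegree_mul_of_isDomain hne hg, hlin]

theorem card_mul_sum_vanishingOrder_le [IsDomain R] {n : ℕ} (S : Finset R)
    {f : MvPolynomial (Fin n) R} (hf : f ≠ 0) :
    S.card * ∑ p ∈ Fintype.piFinset (fun _ => S), vanishingOrder p f ≤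
      f.totalDegree * S.card ^ n := by
  induction n with
  | zero =>
    simp [vanishingOrder_eq_zero_of_isEmpty _ hf]
  | succ n ih =>
    induction hd : f.totalDegree using Nat.strong_induction_on generalizing f with
    | _ d ihd =>
    subst hd
    by_cases hc : ∀ c ∈ S, specialize c f ≠ 0
    · calc (S.card : ℕ∞) * ∑ p ∈ Fintype.piFinset (fun _ => S), vanishingOrder p f
          ≤ ∑ c ∈ S,
              S.card * ∑ p ∈ Fintype.piFinset (fun _ => S), vanishingOrder p (specialize c f) := by
            rw [← Finset.mul_sum]
            gcongr
            exact sum_vanishingOrder_le_sum_vanishingOrder_specialize S f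
        _ ≤ ∑ _c ∈ S, (f.totalDegree * S.card ^ n : ℕ∞) := by
            refine Finset.sum_le_sum fun c hcS => (ih (hc c hcS)).trans ?_
            gcongr
            exact totalDegree_specialize_le c f
        _ = f.totalDegree * S.card ^ (n + 1) := by
            rw [Finset.sum_const, nsmul_eq_mul, pow_succ]
            ring
    push Not at hc
    obtain ⟨c, hcS, hc⟩ := hc
    obtain ⟨g, rfl⟩ := X_sub_C_dvd_iff_specialize_eq_zero.2 hc
    have hg : g ≠ 0 := right_ne_zero_of_mul hf
    have hlt : g.totalDegree < ((X 0 - C c) * g).totalDegree := by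
      rw [totalDegree_X_sub_C_mul 0 c hg]
      omega
    simp_rw [vanishingOrder_mul, Finset.sum_add_distrib, sum_vanishingOrder_X_sub_C hcS, mul_add,
      totalDegree_X_sub_C_mul 0 c hg]
    calc (S.card : ℕ∞) * S.card ^ n +
          S.card * ∑ p ∈ Fintype.piFinset (fun _ => S), vanishingOrder p g
        ≤ S.card * S.card ^ n + g.totalDegree * S.card ^ (n + 1) :=
          add_le_add le_rfl (ihd _ hlt hg rfl)
      _ = (1 + g.totalDegree : ℕ) * S.card ^ (n + 1) := by
          push_cast
          ring

end VanishingOrder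

section Norm

variable {A : Type*} [CommRing A]

theorem norm_mk_ne_zero_of_isRelPrime [IsDomain A] [DecompositionMonoid (Polynomial A)]
    {G H : Polynomial A} (hG : G.Monic) (hGH : IsRelPrime G H) :
    Algebra.norm A (AdjoinRoot.mk G H) ≠ 0 := by
  intro h
  have := hG.free_adjoinRoot
  obtain ⟨x, hx, hx0⟩ := Submodule.exists_mem_ne_zero_of_ne_bot
    (LinearMap.bot_lt_ker_of_det_eq_zero h).ne'
  obtain ⟨u, rfl⟩ := AdjoinRoot.mk_surjective x
  have hdvd : G ∣ H * u := by
    rw [← AdjoinRoot.mk_eq_zero, map_mul]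
    exact hx
  exact hx0 (AdjoinRoot.mk_eq_zero.2 (hGH.dvd_of_dvd_mul_left hdvd))

theorem norm_mk_eq_det {G : Polynomial A} (hG : G.Monic) (H : Polynomial A) :
    Algebra.norm A (AdjoinRoot.mk G H) =
      (Matrix.of fun i j : Fin G.natDegree => ((H * Polynomial.X ^ (j : ℕ)) %ₘ G).coeff i).det := by
  rw [Algebra.norm_eq_matrix_det (AdjoinRoot.powerBasisAux' hG)]
  congr 1
  ext i j
  have hroot : AdjoinRoot.powerBasisAux' hG j = AdjoinRoot.mk G (Polynomial.X ^ (j : ℕ)) := by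
    rw [map_pow, AdjoinRoot.mk_X]
    exact (AdjoinRoot.powerBasis' hG).basis_eq_pow j
  rw [Algebra.leftMulMatrix_eq_repr_mul, AdjoinRoot.powerBasisAux'_repr_apply_to_fun, hroot,
    ← map_mul, AdjoinRoot.modByMonicHom_mk, Matrix.of_apply]

theorem det_mem_pow_card {ι : Type*} [Fintype ι] [DecidableEq ι] {M : Matrix ι ι A} {I : Ideal A}
    {s : Finset ι} (h : ∀ i ∈ s, ∀ j, M i j ∈ I) : M.det ∈ I ^ s.card := by
  rw [← Matrix.det_transpose, Matrix.det_apply']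
  refine Ideal.sum_mem _ fun τ _ => Ideal.mul_mem_left _ _ ?_
  rw [← Finset.prod_mul_prod_compl s, ← Finset.prod_const]
  exact Ideal.mul_mem_right _ _ (Ideal.prod_mem_prod fun i hi => h i hi _)

-- Multiplying by the Vandermonde matrix of `y` replaces row `i` of the matrix of `H` by the values
-- at `y i` of the remainders of `H * X ^ j` modulo `G`, and these lie in `I` for `i ∈ s`.
theorem norm_mk_mem_pow_card {G H : Polynomial A} (hG : G.Monic) {I : Ideal A}
    {y : Fin G.natDegree → A} (hy : IsUnit (Matrix.vandermonde y).det)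
    {s : Finset (Fin G.natDegree)} (hs : ∀ i ∈ s, G.eval (y i) ∈ I ∧ H.eval (y i) ∈ I) :
    Algebra.norm A (AdjoinRoot.mk G H) ∈ I ^ s.card := by
  rw [norm_mk_eq_det hG, ← Ideal.unit_mul_mem_iff_mem _ hy, ← Matrix.det_mul]
  refine det_mem_pow_card fun i hi j => ?_
  have hrow : (Matrix.vandermonde y * Matrix.of fun i j : Fin G.natDegree =>
      ((H * Polynomial.X ^ (j : ℕ)) %ₘ G).coeff i) i j =
        ((H * Polynomial.X ^ (j : ℕ)) %ₘ G).eval (y i) := by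
    have hG1 : G ≠ 1 := by
      rintro rfl
      exact absurd j.2 (by simp)
    rw [Polynomial.eval_eq_sum_range' (Polynomial.natDegree_modByMonic_lt _ hG hG1),
      Finset.sum_range, Matrix.mul_apply]
    refine Finset.sum_congr rfl fun l _ => ?_
    rw [Matrix.of_apply, Matrix.vandermonde_apply, mul_comm]
  rw [hrow, Polynomial.modByMonic_eq_sub_mul_div, Polynomial.eval_sub, Polynomial.eval_mul,
    Polynomial.eval_mul]
  exact I.sub_mem (I.mul_mem_right _ (hs i hi).2) (I.mul_mem_right _ (hs i hi).1)

end Norm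

section HomogeneousNorm

variable {R : Type*} [CommRing R]

-- The entry `M i j` has degree `c j - r i`, with `M i j = 0` where this is negative.
theorem isHomogeneous_det {σ ι : Type*} [Fintype ι] [DecidableEq ι]
    {M : Matrix ι ι (MvPolynomial σ R)} {r c : ι → ℕ} {e : ℕ}
    (hM : ∀ i j k, r i + k = c j → (M i j).IsHomogeneous k) (hzero : ∀ i j, c j < r i → M i j = 0)
    (he : ∑ i, r i + e = ∑ i, c i) : M.det.IsHomogeneous e := by
  rw [Matrix.det_apply']
  refine IsHomogeneous.sum _ _ _ fun τ _ => ?_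
  rw [← map_intCast (C (σ := σ) (R := R))]
  refine IsHomogeneous.C_mul ?_ _
  by_cases hτ : ∃ i, c i < r (τ i)
  · obtain ⟨i, hi⟩ := hτ
    have hprod : ∏ i, M (τ i) i = 0 := Finset.prod_eq_zero (Finset.mem_univ i) (hzero _ _ hi)
    exact hprod ▸ isHomogeneous_zero _ _ _
  push Not at hτ
  have hsum : ∑ i, (c i - r (τ i)) = e := by
    have h : ∑ i, (r (τ i) + (c i - r (τ i))) = ∑ i, c i :=
      Finset.sum_congr rfl fun i _ => Nat.add_sub_cancel' (hτ i)
    rw [Finset.sum_add_distrib, Equiv.sum_comp τ r] at h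
    omega
  rw [← hsum]
  exact IsHomogeneous.prod _ _ _ fun i _ => hM _ _ _ (Nat.add_sub_cancel' (hτ i))

variable {n : ℕ}

theorem coeff_finSuccEquiv_eq_zero_of_lt {f : MvPolynomial (Fin (n + 1)) R} {i : ℕ}
    (hi : f.totalDegree < i) : (finSuccEquiv R n f).coeff i = 0 := by
  by_contra h
  have := totalDegree_coeff_finSuccEquiv_add_le f i h
  omega

theorem finSuccEquiv_rename_succ (c : MvPolynomial (Fin n) R) :
    finSuccEquiv R n (rename Fin.succ c) = Polynomial.C c := by
  have h : ((finSuccEquiv R n).toAlgHom.comp (rename Fin.succ)).toRingHom = Polynomial.C :=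
    ringHom_ext (by simp) (by simp [finSuccEquiv_X_succ])
  exact RingHom.congr_fun h c

theorem isHomogeneous_finSuccEquiv_symm_C_mul_X_pow {c : MvPolynomial (Fin n) R} {s : ℕ}
    (hc : c.IsHomogeneous s) (k : ℕ) :
    ((finSuccEquiv R n).symm (Polynomial.C c * Polynomial.X ^ k)).IsHomogeneous (s + k) := by
  have h : (finSuccEquiv R n).symm (Polynomial.C c * Polynomial.X ^ k) =
      rename Fin.succ c * X 0 ^ k := by
    rw [AlgEquiv.symm_apply_eq, map_mul, map_pow, finSuccEquiv_X_zero, finSuccEquiv_rename_succ]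
  rw [h]
  exact hc.rename_isHomogeneous.mul (isHomogeneous_X_pow 0 k)

theorem isHomogeneous_finSuccEquiv_symm_modByMonic [Nontrivial R]
    {F G : Polynomial (MvPolynomial (Fin n) R)} {e : ℕ} (hG : G.Monic)
    (hGh : ((finSuccEquiv R n).symm G).IsHomogeneous G.natDegree)
    (hF : ((finSuccEquiv R n).symm F).IsHomogeneous e) :
    ((finSuccEquiv R n).symm (F %ₘ G)).IsHomogeneous e := by
  induction hd : F.degree using WellFoundedLT.induction generalizing F with
  | _ d ih =>
  subst hd
  by_cases hlt : F.degree < G.degree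
  · rwa [(Polynomial.modByMonic_eq_self_iff hG).2 hlt]
  by_cases hF0 : F = 0
  · rwa [hF0, Polynomial.zero_modByMonic, ← hF0]
  have hle : G.natDegree ≤ F.natDegree := Polynomial.natDegree_le_natDegree (not_lt.1 hlt)
  have hFe : F.natDegree ≤ e := by
    by_contra! h
    have := coeff_finSuccEquiv_eq_zero_of_lt (hF.totalDegree_le.trans_lt h)
    rw [AlgEquiv.apply_symm_apply, Polynomial.coeff_natDegree, Polynomial.leadingCoeff_eq_zero]
      at this
    exact hF0 this
  have hlead : F.leadingCoeff.IsHomogeneous (e - F.natDegree) := by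
    have := hF.finSuccEquiv_coeff_isHomogeneous F.natDegree _ (Nat.add_sub_cancel' hFe)
    rwa [AlgEquiv.apply_symm_apply] at this
  have hsub := ih _ (Polynomial.div_wf_lemma ⟨not_lt.1 hlt, hF0⟩ hG) (by
    rw [map_sub, map_mul]
    refine hF.sub ?_
    have := hGh.mul
      (isHomogeneous_finSuccEquiv_symm_C_mul_X_pow hlead (F.natDegree - G.natDegree))
    rwa [show G.natDegree + (e - F.natDegree + (F.natDegree - G.natDegree)) = e by omega]
      at this) rfl
  rwa [Polynomial.sub_modByMonic, mul_comm G, Polynomial.mul_self_modByMonic hG, sub_zero] at hsub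

theorem isHomogeneous_norm_mk [Nontrivial R] {G H : Polynomial (MvPolynomial (Fin n) R)} {b : ℕ}
    (hG : G.Monic) (hGh : ((finSuccEquiv R n).symm G).IsHomogeneous G.natDegree)
    (hH : ((finSuccEquiv R n).symm H).IsHomogeneous b) :
    (Algebra.norm (MvPolynomial (Fin n) R) (AdjoinRoot.mk G H)).IsHomogeneous
      (G.natDegree * b) := by
  rw [norm_mk_eq_det hG]
  have hcol (j : ℕ) : ((finSuccEquiv R n).symm
      ((H * Polynomial.X ^ j) %ₘ G)).IsHomogeneous (b + j) := by
    refine isHomogeneous_finSuccEquiv_symm_modByMonic hG hGh ?_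
    have hX := isHomogeneous_finSuccEquiv_symm_C_mul_X_pow (isHomogeneous_one (Fin n) R) j
    rw [map_one, one_mul, zero_add] at hX
    rw [map_mul]
    exact hH.mul hX
  refine isHomogeneous_det (ι := Fin G.natDegree) (r := fun i => (i : ℕ))
    (c := fun j => b + (j : ℕ)) (fun i j k hk => ?_) (fun i j hij => ?_) ?_
  · have hcoeff := (hcol j).finSuccEquiv_coeff_isHomogeneous i k hk
    rwa [AlgEquiv.apply_symm_apply] at hcoeff
  · have hcoeff := coeff_finSuccEquiv_eq_zero_of_lt ((hcol j).totalDegree_le.trans_lt hij)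
    rwa [AlgEquiv.apply_symm_apply] at hcoeff
  · simp [Finset.sum_add_distrib, add_comm]

end HomogeneousNorm

section CommonZeros

theorem exists_embedding_card_filter_mem_eq {α : Type*} [Fintype α] [DecidableEq α] {a : ℕ}
    {Y : Finset α} (hY : Y.card ≤ a) (ha : a ≤ Fintype.card α) :
    ∃ v : Fin a ↪ α, (Finset.univ.filter fun i => v i ∈ Y).card = Y.card := by
  obtain ⟨T, hYT, hT⟩ := Finset.exists_superset_card_eq hY ha
  refine ⟨(T.equivFinOfCardEq hT).symm.toEmbedding.trans (.subtype _), ?_⟩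
  rw [← Finset.card_map ((T.equivFinOfCardEq hT).symm.toEmbedding.trans (.subtype _))]
  congr 1
  ext y
  simp only [Finset.mem_map, Finset.mem_filter, Finset.mem_univ, true_and]
  refine ⟨fun ⟨_, hi, hiy⟩ => hiy ▸ hi, fun hy => ⟨T.equivFinOfCardEq hT ⟨y, hYT hy⟩, ?_⟩⟩
  simp [hy]

variable {K : Type*} [Field K] {n : ℕ}

theorem isUnit_det_vandermonde_C {σ : Type*} {a : ℕ} {v : Fin a → K} (hv : Function.Injective v) :
    IsUnit (Matrix.vandermonde fun i => (C (v i) : MvPolynomial σ K)).det := by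
  have hdet : (Matrix.vandermonde fun i => (C (v i) : MvPolynomial σ K)).det =
      C (Matrix.vandermonde v).det := by
    simp only [Matrix.det_vandermonde, map_prod, map_sub]
  rw [hdet]
  exact (IsUnit.mk0 _ (Matrix.det_vandermonde_ne_zero_iff.2 hv)).map C

theorem card_common_zeros_le_vanishingOrder_norm_mk [Fintype K] [DecidableEq K]
    {G : Polynomial (MvPolynomial (Fin n) K)} (hG : G.Monic)
    (hcard : G.natDegree ≤ Fintype.card K) (H : Polynomial (MvPolynomial (Fin n) K))
    (p : Fin n → K) :
    ({y | (G.map (eval p)).eval y = 0 ∧ (H.map (eval p)).eval y = 0} : Finset K).card ≤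
      vanishingOrder p (Algebra.norm (MvPolynomial (Fin n) K) (AdjoinRoot.mk G H)) := by
  set Y : Finset K := {y | (G.map (eval p)).eval y = 0 ∧ (H.map (eval p)).eval y = 0}
  have hYG : Y.card ≤ G.natDegree := by
    rw [← hG.natDegree_map (eval p)]
    refine Polynomial.card_le_degree_of_subset_roots fun y hy => ?_
    rw [Polynomial.mem_roots (hG.map _).ne_zero]
    exact (Finset.mem_filter.1 hy).2.1
  obtain ⟨v, hv⟩ := exists_embedding_card_filter_mem_eq hYG hcard
  have heval (F : Polynomial (MvPolynomial (Fin n) K)) (y : K) :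
      eval p (F.eval (C y)) = (F.map (eval p)).eval y := by
    rw [← Polynomial.eval_map_apply, eval_C]
  rw [← hv]
  refine le_vanishingOrder_of_mem_ker_eval_pow
    (norm_mk_mem_pow_card hG (isUnit_det_vandermonde_C v.injective) fun i hi => ?_)
  simpa only [RingHom.mem_ker, heval] using (Finset.mem_filter.1 (Finset.mem_filter.1 hi).2).2

end CommonZeros

section LinearSubst

variable {ι R : Type*} [Fintype ι] [DecidableEq ι] [CommRing R]

/-- The linear change of coordinates `f(x) ↦ f(A x)`, used to make a form monic in `x₀`. -/
noncomputable def linearSubst (A : GL ι R) : MvPolynomial ι R ≃ₐ[R] MvPolynomial ι R :=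
  AlgEquiv.ofAlgHom (bind₁ A.1.toMvPolynomial) (bind₁ (A⁻¹).1.toMvPolynomial)
    (algHom_ext fun i => by simp [← Matrix.toMvPolynomial_mul, Matrix.toMvPolynomial_one])
    (algHom_ext fun i => by simp [← Matrix.toMvPolynomial_mul, Matrix.toMvPolynomial_one])

theorem eval_linearSubst (A : GL ι R) (f : MvPolynomial ι R) (z : ι → R) :
    eval z (linearSubst A f) = eval (A.1.mulVec z) f := by
  have h : eval z (linearSubst A f) = eval (fun i => eval z (A.1.toMvPolynomial i)) f :=
    eval₂Hom_bind₁ _ _ _ _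
  simpa only [Matrix.toMvPolynomial_eval_eq_apply] using h

theorem isHomogeneous_linearSubst (A : GL ι R) {f : MvPolynomial ι R} {a : ℕ}
    (hf : f.IsHomogeneous a) : (linearSubst A f).IsHomogeneous a := by
  have h := hf.aeval A.1.toMvPolynomial (Matrix.toMvPolynomial_isHomogeneous A.1)
  rwa [one_mul] at h

theorem card_nonzero_common_zeros_linearSubst [DecidableEq R] [Fintype R] (A : GL ι R)
    (f g : MvPolynomial ι R) :
    ({z | z ≠ 0 ∧ eval z (linearSubst A f) = 0 ∧ eval z (linearSubst A g) = 0} :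
      Finset (ι → R)).card =
      ({z | z ≠ 0 ∧ eval z f = 0 ∧ eval z g = 0} : Finset (ι → R)).card := by
  have hA : Function.Injective A.1.mulVec := Matrix.mulVec_injective_of_isUnit A.isUnit
  refine Finset.card_bijective A.1.mulVec (Finite.injective_iff_bijective.1 hA) fun z => ?_
  rw [Finset.mem_filter_univ, Finset.mem_filter_univ, hA.ne_iff' (Matrix.mulVec_zero A.1),
    eval_linearSubst, eval_linearSubst]

theorem exists_generalLinearGroup_mulVec_single_eq {K : Type*} [Field K] {i : ι} {v : ι → K}
    (hv : v i ≠ 0) : ∃ A : GL ι K, A.1.mulVec (Pi.single i 1) = v := by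
  have hdet : ((1 : Matrix ι ι K).updateCol i v).det = v i := by
    rw [← Matrix.cramer_apply, Matrix.cramer_one]
    rfl
  refine ⟨Matrix.GeneralLinearGroup.mkOfDetNeZero _ (hdet ▸ hv), ?_⟩
  ext j
  simp [Matrix.GeneralLinearGroup.mkOfDetNeZero]

end LinearSubst

section NormalPosition

theorem eval_smul_of_isHomogeneous {σ R : Type*} [CommSemiring R] {f : MvPolynomial σ R} {a : ℕ}
    (hf : f.IsHomogeneous a) (c : R) (z : σ → R) : eval (c • z) f = c ^ a * eval z f := by
  rw [eval_eq, eval_eq, Finset.mul_sum]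
  refine Finset.sum_congr rfl fun s hs => ?_
  rw [hf.degree_eq_sum_deg_support hs]
  simp only [Pi.smul_apply, smul_eq_mul, mul_pow, Finset.prod_mul_distrib,
    Finset.prod_pow_eq_pow_sum]
  ring

variable {R : Type*} [CommRing R] {n a : ℕ} {f : MvPolynomial (Fin (n + 1)) R}

theorem coeff_finSuccEquiv_of_isHomogeneous (hf : f.IsHomogeneous a) :
    (finSuccEquiv R n f).coeff a = C (eval (Pi.single 0 1) f) := by
  have hcoeff (i : ℕ) (hi : i ≠ a) : eval 0 ((finSuccEquiv R n f).coeff i) = 0 := by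
    rcases hi.lt_or_gt with hi | hi
    · have hi' := hf.finSuccEquiv_coeff_isHomogeneous i (a - i) (by omega)
      have := eval_smul_of_isHomogeneous hi' 0 0
      rwa [smul_zero, zero_pow (by omega), zero_mul] at this
    · rw [coeff_finSuccEquiv_eq_zero_of_lt (hf.totalDegree_le.trans_lt hi), map_zero]
  have hmap : (finSuccEquiv R n f).map (eval 0) =
      Polynomial.monomial a (eval 0 ((finSuccEquiv R n f).coeff a)) := by
    ext i
    rw [Polynomial.coeff_map, Polynomial.coeff_monomial]
    split_ifs with hi
    · rw [hi]
    · exact hcoeff i (Ne.symm hi)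
  have hsingle : (Pi.single 0 1 : Fin (n + 1) → R) = Fin.cons 1 0 := by
    ext i
    refine Fin.cases ?_ (fun j => ?_) i <;> simp
  have hconst := hf.finSuccEquiv_coeff_isHomogeneous a 0 (add_zero a)
  rw [totalDegree_eq_zero_iff_eq_C.1 (Nat.le_zero.1 hconst.totalDegree_le), hsingle,
    eval_eq_eval_mv_eval', hmap, Polynomial.eval_monomial, one_pow, mul_one, eval_zero,
    constantCoeff_eq]

theorem natDegree_finSuccEquiv_le_of_isHomogeneous (hf : f.IsHomogeneous a) :
    (finSuccEquiv R n f).natDegree ≤ a :=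
  Polynomial.natDegree_le_iff_coeff_eq_zero.2 fun _ hi =>
    coeff_finSuccEquiv_eq_zero_of_lt (hf.totalDegree_le.trans_lt hi)

theorem monic_finSuccEquiv_of_isHomogeneous (hf : f.IsHomogeneous a)
    (h1 : eval (Pi.single 0 1) f = 1) : (finSuccEquiv R n f).Monic := by
  refine Polynomial.monic_of_natDegree_le_of_coeff_eq_one a
    (natDegree_finSuccEquiv_le_of_isHomogeneous hf) ?_
  rw [coeff_finSuccEquiv_of_isHomogeneous hf, h1, C_1]

theorem natDegree_finSuccEquiv_of_isHomogeneous [Nontrivial R] (hf : f.IsHomogeneous a)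
    (h1 : eval (Pi.single 0 1) f = 1) : (finSuccEquiv R n f).natDegree = a := by
  refine Polynomial.natDegree_eq_of_le_of_coeff_ne_zero
    (natDegree_finSuccEquiv_le_of_isHomogeneous hf) ?_
  rw [coeff_finSuccEquiv_of_isHomogeneous hf, h1, C_1]
  exact one_ne_zero

theorem tail_ne_zero_of_eval_eq_zero [IsDomain R] (hf : f.IsHomogeneous a)
    (h1 : eval (Pi.single 0 1) f = 1) {z : Fin (n + 1) → R} (hz : z ≠ 0) (hfz : eval z f = 0) :
    Fin.tail z ≠ 0 := by
  intro htail
  have hsmul : z = z 0 • Pi.single 0 1 := by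
    ext i
    refine Fin.cases ?_ (fun j => ?_) i
    · simp
    · simpa [Fin.tail] using congrFun htail j
  rw [hsmul, eval_smul_of_isHomogeneous hf, h1, mul_one] at hfz
  exact hz (by rw [hsmul, eq_zero_of_pow_eq_zero hfz, zero_smul])

end NormalPosition

section AffineCone

variable {K : Type*} [Field K] [Fintype K] [DecidableEq K] {n : ℕ}

theorem sum_vanishingOrder_erase_zero_add_le {e : ℕ} {f : MvPolynomial (Fin (n + 1)) K}
    (hf : f.IsHomogeneous e) (hf0 : f ≠ 0) :
    ∑ p ∈ Finset.univ.erase 0, vanishingOrder p f + e ≤ e * Fintype.card K ^ n := by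
  have h := card_mul_sum_vanishingOrder_le Finset.univ hf0
  rw [Fintype.piFinset_univ, Finset.card_univ, hf.totalDegree hf0, pow_succ',
    mul_left_comm, ENat.mul_le_mul_left_iff (by simp) (ENat.natCast_ne_top _),
    ← Finset.sum_erase_add _ _ (Finset.mem_univ 0), vanishingOrder_zero_of_isHomogeneous hf hf0]
    at h
  exact h

theorem card_nonzero_zeros_add_le {e : ℕ} {f : MvPolynomial (Fin (n + 1)) K}
    (hf : f.IsHomogeneous e) (hf0 : f ≠ 0) :
    ({z | z ≠ 0 ∧ eval z f = 0} : Finset (Fin (n + 1) → K)).card + e ≤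
      e * Fintype.card K ^ n := by
  have hsum : (({z | z ≠ 0 ∧ eval z f = 0} : Finset (Fin (n + 1) → K)).card : ℕ∞) ≤
      ∑ p ∈ Finset.univ.erase 0, vanishingOrder p f := by
    rw [Finset.card_eq_sum_ones, Nat.cast_sum]
    refine (Finset.sum_le_sum fun z hz => ?_).trans
      (Finset.sum_le_sum_of_subset fun z hz => ?_)
    · rw [Nat.cast_one, Order.one_le_iff_ne_zero, ne_eq, vanishingOrder_eq_zero_iff, not_not]
      exact (Finset.mem_filter.1 hz).2.2
    · exact Finset.mem_erase.2 ⟨(Finset.mem_filter.1 hz).2.1, Finset.mem_univ z⟩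
  exact_mod_cast (add_le_add_left hsum _).trans (sum_vanishingOrder_erase_zero_add_le hf hf0)

theorem card_nonzero_common_zeros_le_sum_of_eval_eq_one {a : ℕ}
    {G : MvPolynomial (Fin (n + 1)) K} (hG : G.IsHomogeneous a)
    (h1 : eval (Pi.single 0 1) G = 1) (H : MvPolynomial (Fin (n + 1)) K) :
    ({z | z ≠ 0 ∧ eval z G = 0 ∧ eval z H = 0} : Finset (Fin (n + 1) → K)).card ≤
      ∑ p ∈ Finset.univ.erase 0, ({y | ((finSuccEquiv K n G).map (eval p)).eval y = 0 ∧
        ((finSuccEquiv K n H).map (eval p)).eval y = 0} : Finset K).card := by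
  rw [← Finset.card_sigma]
  refine Finset.card_le_card_of_injOn (fun z => ⟨Fin.tail z, z 0⟩) (fun z hz => ?_) ?_
  · obtain ⟨hz, hzG, hzH⟩ := (Finset.mem_filter.1 hz).2
    simpa [← eval_eq_eval_mv_eval', hzG, hzH] using tail_ne_zero_of_eval_eq_zero hG h1 hz hzG
  · intro z _ w _ hzw
    obtain ⟨htail, hhead⟩ := Sigma.mk.inj hzw
    rw [← Fin.cons_self_tail z, ← Fin.cons_self_tail w, htail, eq_of_heq hhead]

theorem card_nonzero_common_zeros_add_le_of_eval_eq_one {a b : ℕ}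
    {G H : MvPolynomial (Fin (n + 2)) K} (hG : G.IsHomogeneous a) (hH : H.IsHomogeneous b)
    (h1 : eval (Pi.single 0 1) G = 1) (ha : a ≤ Fintype.card K) (hGH : IsRelPrime G H) :
    ({z | z ≠ 0 ∧ eval z G = 0 ∧ eval z H = 0} : Finset (Fin (n + 2) → K)).card + a * b ≤
      a * b * Fintype.card K ^ n := by
  have hdeg := natDegree_finSuccEquiv_of_isHomogeneous hG h1
  have hmonic := monic_finSuccEquiv_of_isHomogeneous hG h1
  have hrel : IsRelPrime (finSuccEquiv K (n + 1) G) (finSuccEquiv K (n + 1) H) :=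
    IsRelPrime.of_map (finSuccEquiv K (n + 1)).symm (by simpa only [AlgEquiv.symm_apply_apply])
  have hnorm := isHomogeneous_norm_mk (H := finSuccEquiv K (n + 1) H) hmonic
    (by rwa [AlgEquiv.symm_apply_apply, hdeg]) (by rwa [AlgEquiv.symm_apply_apply])
  rw [hdeg] at hnorm
  have hsum := sum_vanishingOrder_erase_zero_add_le hnorm
    (norm_mk_ne_zero_of_isRelPrime hmonic hrel)
  refine Nat.cast_le.1 (le_trans ?_ (hsum.trans_eq (by norm_cast)))
  rw [Nat.cast_add]
  gcongr
  refine (Nat.cast_le.2 (card_nonzero_common_zeros_le_sum_of_eval_eq_one hG h1 H)).trans ?_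
  rw [Nat.cast_sum]
  exact Finset.sum_le_sum fun p _ =>
    card_common_zeros_le_vanishingOrder_norm_mk hmonic (hdeg.trans_le ha) _ p

theorem card_nonzero_common_zeros_add_le {a b : ℕ} {G H : MvPolynomial (Fin (n + 2)) K}
    (hG : G.IsHomogeneous a) (hH : H.IsHomogeneous b) (hG0 : G ≠ 0) (ha : a < Fintype.card K)
    (hGH : IsRelPrime G H) :
    ({z | z ≠ 0 ∧ eval z G = 0 ∧ eval z H = 0} : Finset (Fin (n + 2) → K)).card + a * b ≤
      a * b * Fintype.card K ^ n := by
  obtain ⟨v, hv⟩ : ∃ v, eval v (X 0 * G) ≠ 0 := by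
    by_contra! h
    refine mul_ne_zero (X_ne_zero 0) hG0 (((isHomogeneous_X K 0).mul
      hG).eq_zero_of_forall_eval_eq_zero_of_le_card h ?_)
    rw [Cardinal.mk_fintype]
    exact_mod_cast (by omega : 1 + a ≤ Fintype.card K)
  rw [map_mul, eval_X, mul_ne_zero_iff] at hv
  obtain ⟨A, hA⟩ := exists_generalLinearGroup_mulVec_single_eq hv.1
  have hunit : IsUnit (C (eval v G)⁻¹ : MvPolynomial (Fin (n + 2)) K) :=
    (IsUnit.mk0 _ (inv_ne_zero hv.2)).map C
  have h1 : eval (Pi.single 0 1) (C (eval v G)⁻¹ * linearSubst A G) = 1 := by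
    rw [map_mul, eval_C, eval_linearSubst, hA, inv_mul_cancel₀ hv.2]
  have hrel : IsRelPrime (C (eval v G)⁻¹ * linearSubst A G) (linearSubst A H) :=
    (isRelPrime_mul_unit_left_left hunit).2
      (IsRelPrime.of_map (linearSubst A).symm (by simpa only [AlgEquiv.symm_apply_apply]))
  have hbound := card_nonzero_common_zeros_add_le_of_eval_eq_one
    ((isHomogeneous_linearSubst A hG).C_mul _) (isHomogeneous_linearSubst A hH) h1 ha.le hrel
  have hinv : (eval v G)⁻¹ ≠ 0 := inv_ne_zero hv.2
  simpa only [map_mul, eval_C, mul_eq_zero, hinv, false_or,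
    card_nonzero_common_zeros_linearSubst] using hbound

end AffineCone

section PointCount

theorem sub_one_mul_pp_add_one {q : ℕ} (hq : 1 ≤ q) (n : ℕ) :
    (q - 1) * pp q (n - 1) + 1 = q ^ n := by
  cases n with
  | zero => simp [pp]
  | succ n =>
    obtain ⟨q, rfl⟩ := Nat.exists_eq_add_of_le' hq
    rw [pp, if_neg (by omega), Nat.cast_succ, add_sub_cancel_right, Int.toNat_natCast,
      Nat.add_sub_cancel, mul_comm, geom_sum_mul_add]

theorem le_mul_pp_of_sub_one_mul_add_le {q n e s : ℕ} (hq : 1 < q)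
    (h : (q - 1) * s + e ≤ e * q ^ n) : s ≤ e * pp q (n - 1) := by
  rw [← sub_one_mul_pp_add_one hq.le, mul_add, mul_one, add_le_add_iff_right,
    mul_left_comm] at h
  exact Nat.le_of_mul_le_mul_left h (Nat.sub_pos_of_lt hq)

theorem pp_eq_pow_add (q n : ℕ) : pp q n = q ^ n + pp q (n - 1) := by
  cases n with
  | zero => simp [pp]
  | succ n =>
    rw [Nat.cast_succ, add_sub_cancel_right, ← Nat.cast_succ, pp, pp, if_neg (by omega),
      if_neg (by omega), Int.toNat_natCast, Int.toNat_natCast, Finset.sum_range_succ, add_comm]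

theorem mul_pp_add_sq_mul_pp_lt {q e δ n : ℕ} (he : 0 < e) (hδ : 2 ≤ δ) (hq : e + δ < q - 1) :
    e * pp q n + δ * δ * pp q (n - 1) < (e + δ - 1) * q ^ n + pp q (n - 1) := by
  have hn := sub_one_mul_pp_add_one (q := q) (by omega) n
  rw [pp_eq_pow_add]
  set P := pp q (n - 1)
  obtain ⟨k, rfl⟩ := Nat.exists_eq_add_of_le' hδ
  have hcoeff : e + (k + 2) * (k + 2) ≤ (k + 1) * (q - 1) + 1 := by nlinarith
  have hP := Nat.mul_le_mul_right P hcoeff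
  rw [show e + (k + 2) - 1 = e + (k + 1) by omega]
  calc e * (q ^ n + P) + (k + 2) * (k + 2) * P
      = e * q ^ n + (e + (k + 2) * (k + 2)) * P := by ring
    _ ≤ e * q ^ n + ((k + 1) * (q - 1) + 1) * P := by gcongr
    _ < e * q ^ n + (k + 1) * ((q - 1) * P + 1) + P := by linarith
    _ = (e + (k + 1)) * q ^ n + P := by rw [hn]; ring

end PointCount

section Projective

variable {K : Type*} [Field K] [Fintype K]

theorem card_sub_one_mul_ncard_le {V : Type*} [AddCommGroup V] [Module K V] [Finite V]
    {S : Set (Projectivization K V)} {U : Finset V} (hU : ∀ x ∈ S, ∀ c : Kˣ, c • x.rep ∈ U) :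
    (Fintype.card K - 1) * S.ncard ≤ U.card := by
  classical
  rw [Set.ncard_eq_toFinset_card S, ← Fintype.card_units, ← Finset.card_univ,
    ← Finset.card_product]
  refine Finset.card_le_card_of_injOn (fun x => x.1 • x.2.rep) ?_ ?_
  · rintro ⟨c, x⟩ hx
    exact hU x (by simpa using hx) c
  · rintro ⟨c, x⟩ - ⟨d, y⟩ - h
    have h' : c • x.rep = d • y.rep := h
    obtain rfl : x = y := by
      rw [← x.mk_rep, ← y.mk_rep, Projectivization.mk_eq_mk_iff]
      exact ⟨c⁻¹ * d, by rw [mul_smul, ← h', inv_smul_smul]⟩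
    rw [Units.ext (smul_left_injective K x.rep_nonzero h')]

theorem ncard_zeros_le {n e : ℕ} {f : MvPolynomial (Fin (n + 1)) K} (hf : f.IsHomogeneous e)
    (hf0 : f ≠ 0) :
    Set.ncard {x : Projectivization K (Fin (n + 1) → K) | eval x.rep f = 0} ≤
      e * pp (Fintype.card K) (n - 1) := by
  classical
  refine le_mul_pp_of_sub_one_mul_add_le Fintype.one_lt_card
    ((Nat.add_le_add_right (card_sub_one_mul_ncard_le fun x hx c => ?_) e).trans
      (card_nonzero_zeros_add_le hf hf0))
  have hx' : eval x.rep f = 0 := hx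
  rw [Finset.mem_filter_univ, Units.smul_def, eval_smul_of_isHomogeneous hf, hx', mul_zero]
  exact ⟨smul_ne_zero c.ne_zero x.rep_nonzero, rfl⟩

theorem ncard_common_zeros_le {n a b : ℕ} {G H : MvPolynomial (Fin (n + 2)) K}
    (hG : G.IsHomogeneous a) (hH : H.IsHomogeneous b) (hG0 : G ≠ 0) (ha : a < Fintype.card K)
    (hGH : IsRelPrime G H) :
    Set.ncard {x : Projectivization K (Fin (n + 2) → K) | eval x.rep G = 0 ∧ eval x.rep H = 0} ≤
      a * b * pp (Fintype.card K) (n - 1) := by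
  classical
  refine le_mul_pp_of_sub_one_mul_add_le Fintype.one_lt_card
    ((Nat.add_le_add_right (card_sub_one_mul_ncard_le fun x hx c => ?_) (a * b)).trans
      (card_nonzero_common_zeros_add_le hG hH hG0 ha hGH))
  obtain ⟨hxG, hxH⟩ : eval x.rep G = 0 ∧ eval x.rep H = 0 := hx
  rw [Finset.mem_filter_univ, Units.smul_def, eval_smul_of_isHomogeneous hG,
    eval_smul_of_isHomogeneous hH, hxG, hxH, mul_zero, mul_zero]
  exact ⟨smul_ne_zero c.ne_zero x.rep_nonzero, rfl, rfl⟩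

theorem ncard_common_zeros_mul_left_le {n e a b : ℕ} {D G H : MvPolynomial (Fin (n + 2)) K}
    (hD : D.IsHomogeneous e) (hG : G.IsHomogeneous a) (hH : H.IsHomogeneous b) (hD0 : D ≠ 0)
    (hG0 : G ≠ 0) (ha : a < Fintype.card K) (hGH : IsRelPrime G H) :
    Set.ncard {x : Projectivization K (Fin (n + 2) → K) |
        eval x.rep (D * G) = 0 ∧ eval x.rep (D * H) = 0} ≤
      e * pp (Fintype.card K) n + a * b * pp (Fintype.card K) (n - 1) := by
  have hunion : {x : Projectivization K (Fin (n + 2) → K) |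
      eval x.rep (D * G) = 0 ∧ eval x.rep (D * H) = 0} =
        {x | eval x.rep D = 0} ∪ {x | eval x.rep G = 0 ∧ eval x.rep H = 0} := by
    ext x
    simp only [map_mul, mul_eq_zero, Set.mem_ofPred_eq, Set.mem_union, or_and_left]
  have hzeros := ncard_zeros_le hD hD0
  rw [Nat.cast_succ, add_sub_cancel_right] at hzeros
  rw [hunion]
  exact (Set.ncard_union_le _ _).trans (add_le_add hzeros (ncard_common_zeros_le hG hH hG0 ha hGH))

end Projective

theorem isRelPrime_of_forall_dvd {M : Type*} [CommMonoidWithZero M] [IsLeftCancelMulZero M]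
    {D G H : M} (hD : D ≠ 0) (h : ∀ E, E ∣ D * G → E ∣ D * H → E ∣ D) : IsRelPrime G H := by
  intro E hEG hEH
  obtain ⟨c, hc⟩ := h (D * E) (mul_dvd_mul_left D hEG) (mul_dvd_mul_left D hEH)
  rw [mul_assoc, left_eq_mul₀ hD] at hc
  exact IsUnit.of_mul_eq_one c hc

/-- Low correlation, case 2: if `r > 1`, `1 < d < q-1`, and `F₁,…,F_r` are linearly
independent homogeneous polynomials of degree `d` in `F_q[x₀,…,x_m]` such that for
some `i ≠ j` the gcd of `Fᵢ, Fⱼ` has degree strictly between `0` and `d-1`, then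
`|V(F₁,…,F_r)| < (d-1)q^(m-1) + p_(m-2)`. -/
theorem low_correlation_case2 (q d m r : ℕ) {K : Type} [Field K] [Fintype K]
    (hq : Fintype.card K = q) (hm : 1 ≤ m) (hr : 1 < r) (hd : 1 < d) (hdq : d < q - 1)
    (Fs : Fin r → MvPolynomial (Fin (m + 1)) K)
    (hli : LinearIndependent K Fs) (hhom : ∀ i, (Fs i).IsHomogeneous d)
    (hmid : ∃ i j, i ≠ j ∧ ∃ D : MvPolynomial (Fin (m + 1)) K,
      0 < D.totalDegree ∧ D.totalDegree < d - 1 ∧ D ∣ Fs i ∧ D ∣ Fs j ∧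
      ∀ E : MvPolynomial (Fin (m + 1)) K, E ∣ Fs i → E ∣ Fs j → E ∣ D) :
    Set.ncard {x : Projectivization K (Fin (m + 1) → K) | ∀ i, eval x.rep (Fs i) = 0}
      < (d - 1) * q ^ (m - 1) + pp q ((m : ℤ) - 2) := by
  subst hq
  obtain ⟨i, j, -, D, he, hed, ⟨G, hG⟩, ⟨H, hH⟩, hgcd⟩ := hmid
  obtain ⟨n, rfl⟩ := Nat.exists_eq_add_of_le' hm
  rw [hG, hH] at hgcd
  have hDG : D * G ≠ 0 := hG ▸ hli.ne_zero i
  obtain ⟨δ, hGδ, hDe, hsum⟩ := exists_isHomogeneous_of_mul (hG ▸ hhom i) hDG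
  obtain ⟨δ', hHδ, -, hsum'⟩ := exists_isHomogeneous_of_mul (hH ▸ hhom j) (hH ▸ hli.ne_zero j)
  obtain rfl : δ' = δ := by omega
  have hD0 : D ≠ 0 := left_ne_zero_of_mul hDG
  have hsub : {x : Projectivization K (Fin (n + 2) → K) | ∀ i, eval x.rep (Fs i) = 0} ⊆
      {x | eval x.rep (D * G) = 0 ∧ eval x.rep (D * H) = 0} := fun x hx => ⟨hG ▸ hx i, hH ▸ hx j⟩
  have hcount := ncard_common_zeros_mul_left_le hDe hGδ hHδ hD0 (right_ne_zero_of_mul hDG)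
    (by omega) (isRelPrime_of_forall_dvd hD0 hgcd)
  have harith := mul_pp_add_sq_mul_pp_lt (n := n) he (by omega) (hsum.trans_lt hdq)
  rw [hsum] at harith
  rw [Nat.add_sub_cancel, show ((n + 1 : ℕ) : ℤ) - 2 = n - 1 by push_cast; ring]
  exact (Set.ncard_le_ncard hsub).trans_lt (hcount.trans_lt harith)
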